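/- Let N ≥ 3, let V satisfy condition (V) and the decay condition that there exist A, α > 0 with V⁺(x) ≤ A|x|^{-2-α} for all x ∈ ℝ^N, let f satisfy conditions (f1), (f2), (f3), let λ > 0, and let u be a solution of problem (P_λ). Then u ∈ L²(ℝ^N), i.e. ∫_{ℝ^N} u² dx < ∞. -/

import Mathlib

open MeasureTheory Filter Metric Set
open scoped ENNReal NNReal Topology

noncomputable section

/-- Euclidean space `ℝ^N`. -/
abbrev Euc (N : ℕ) := EuclideanSpace ℝ (Fin N)

/-- The Laplace operator on `ℝ^N`: the sum of the second partial derivatives. -/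
def lap (N : ℕ) (u : Euc N → ℝ) (x : Euc N) : ℝ :=
  ∑ i : Fin N,
    fderiv ℝ (fun y => fderiv ℝ u y (EuclideanSpace.single i 1)) x (EuclideanSpace.single i 1)

/-- The principal eigenvalue `λ₁(R)`: the infimum of `∫_{B_R} |∇u|²` over smooth functions
compactly supported in the open ball `B_R` with `∫_{B_R} V u² = 1`. -/
def lam1 (N : ℕ) (V : Euc N → ℝ) (R : ℝ) : ℝ :=
  sInf { t : ℝ | ∃ u : Euc N → ℝ, ContDiff ℝ (⊤ : ℕ∞) u ∧ HasCompactSupport u ∧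
    tsupport u ⊆ ball (0 : Euc N) R ∧
    (∫ x, V x * u x ^ 2) = 1 ∧ t = ∫ x, ‖gradient u x‖ ^ 2 }

/-- `Λ := lim_{R → ∞} λ₁(R)`. -/
def Lam (N : ℕ) (V : Euc N → ℝ) : ℝ := limUnder atTop (lam1 N V)

/-- Condition (V): `V` is a bounded Hölder-continuous function whose positive part
`V⁺ = max(V, 0)` is nontrivial and decomposes as `V₁ + V₂` with `V₁ ∈ L^{N/2}` and
`|x|² V₂(x) → 0` as `|x| → ∞`. -/
def CondV (N : ℕ) (V V₁ V₂ : Euc N → ℝ) : Prop :=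
  (∃ C β : ℝ≥0, 0 < β ∧ β ≤ 1 ∧ HolderWith C β V) ∧
  (∃ C : ℝ, ∀ x, |V x| ≤ C) ∧
  (∃ x, 0 < V x) ∧
  (∀ x, max (V x) 0 = V₁ x + V₂ x) ∧
  MemLp V₁ ((N : ℝ≥0∞) / 2) volume ∧
  Tendsto (fun x : Euc N => ‖x‖ ^ 2 * V₂ x) (cocompact _) (𝓝 0)

/-- The decay condition: `V⁺(x) ≤ A |x|^{-2-α}`. -/
def CondVDecay (N : ℕ) (V : Euc N → ℝ) : Prop :=
  ∃ A α : ℝ, 0 < A ∧ 0 < α ∧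
    ∀ x : Euc N, x ≠ 0 → max (V x) 0 ≤ A * ‖x‖ ^ (-2 - α)

/-- Conditions (f1), (f2), (f3) on the absorption term `f`. -/
def CondF (N : ℕ) (V : Euc N → ℝ) (f : ℝ → ℝ) : Prop :=
  ContDiff ℝ 1 f ∧ (∀ u : ℝ, 0 ≤ u → 0 ≤ f u) ∧
  -- (f1)
  f 0 = 0 ∧ deriv f 0 = 0 ∧
  0 < Filter.liminf (fun u : ℝ => ((deriv f u / u : ℝ) : EReal)) (𝓝[>] (0 : ℝ)) ∧
  -- (f2)
  StrictMonoOn (fun u : ℝ => f u / u) (Ioi 0) ∧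
  -- (f3)
  (∃ L : EReal, Tendsto (fun u : ℝ => ((f u / u : ℝ) : EReal)) atTop (𝓝 L) ∧
    ((⨆ x, |V x| : ℝ) : EReal) < L)

/-- A solution of problem `(P_λ)`: a positive `C²` function solving the logistic equation
and decaying to zero at infinity. -/
structure IsSolution (N : ℕ) (V : Euc N → ℝ) (f : ℝ → ℝ) (lam : ℝ) (u : Euc N → ℝ) : Prop where
  smooth : ContDiff ℝ 2 u
  pos : ∀ x, 0 < u x
  eqn : ∀ x, -lap N u x = lam * (V x * u x - f (u x))
  decay : Tendsto u (cocompact (Euc N)) (𝓝 0)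

/-- The surface integral `∫_{∂B_R} g dσ` over the sphere of radius `R`, written in polar
coordinates with respect to the canonical surface measure on the unit sphere. -/
def sphereInt (N : ℕ) (g : Euc N → ℝ) (R : ℝ) : ℝ :=
  ∫ ω : sphere (0 : Euc N) 1, g (R • (ω : Euc N)) * R ^ (N - 1)
    ∂((volume : Measure (Euc N)).toSphere)

/-!
Write `d` for the dimension. Near infinity `Δ u ≥ c u² - k u`, where `c > 0` comes from the growth
of `f` at `0` and `k = O(‖x‖ ^ (-2 - α))` from the decay of `V⁺`. Two facts finish the proof.

* Since `k` decays faster than `‖x‖ ^ (-2)`, there is a radial supersolution of `-Δ v = k v` of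
  order `‖x‖ ^ (2 - d)` near infinity, and comparison with it gives `u = O(‖x‖ ^ (2 - d))`.
* Hence `k u = O(‖x‖ ^ (-d - α))` is integrable. Testing `c u² ≤ Δ u + k u` against a cutoff at
  scale `R` and moving the Laplacian onto the cutoff leaves `∫ (Δ φ_R) u`, which is bounded in `R`
  because `|Δ φ_R| ≤ C R⁻²` lives on `‖x‖ ~ R`, where `u = O(R ^ (2 - d))`.
-/

section Laplacian

open Laplacian InnerProductSpace

lemma deriv_deriv_nonpos_of_isLocalMax {h : ℝ → ℝ} {t : ℝ} (hmax : IsLocalMax h t)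
    (hcont : ContinuousAt h t) : deriv (deriv h) t ≤ 0 := by
  by_contra! hpos
  have hmin : IsLocalMin h t := isLocalMin_of_deriv_deriv_pos hpos hmax.deriv_eq_zero hcont
  have hconst : h =ᶠ[𝓝 t] fun _ => h t := by
    filter_upwards [hmax, hmin] with s hs hs' using le_antisymm hs hs'
  rw [hconst.deriv.deriv_eq] at hpos
  simp at hpos

lemma differentiableAt_fderiv_apply {F : Type*} [NormedAddCommGroup F] [NormedSpace ℝ F]
    {u : F → ℝ} {x : F} (hu : ContDiffAt ℝ 2 u x) (e : F) :
    DifferentiableAt ℝ (fun y => fderiv ℝ u y e) x :=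
  ((hu.fderiv_right (m := 1) le_rfl).differentiableAt one_ne_zero).clm_apply
    (differentiableAt_const e)

lemma contDiff_fderiv_apply {F : Type*} [NormedAddCommGroup F] [NormedSpace ℝ F]
    {u : F → ℝ} (hu : ContDiff ℝ 2 u) (e : F) : ContDiff ℝ 1 (fun y => fderiv ℝ u y e) :=
  (hu.fderiv_right le_rfl).clm_apply contDiff_const

lemma fderiv_fderiv_apply_nonpos_of_isLocalMax {F : Type*} [NormedAddCommGroup F]
    [NormedSpace ℝ F] {u : F → ℝ} {x : F} (hu : ContDiffAt ℝ 2 u x) (hmax : IsLocalMax u x)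
    (e : F) : fderiv ℝ (fun y => fderiv ℝ u y e) x e ≤ 0 := by
  set line : ℝ → F := fun t => x + t • e
  have hline (t : ℝ) : HasDerivAt line e t := by
    simpa [line] using ((hasDerivAt_id t).smul_const e).const_add x
  have hline0 : line 0 = x := by simp [line]
  have hlim : Tendsto line (𝓝 0) (𝓝 x) := hline0 ▸ (hline 0).continuousAt.tendsto
  have hderiv : deriv (u ∘ line) =ᶠ[𝓝 0] fun t => fderiv ℝ u (line t) e := by
    have hdiff : ∀ᶠ y in 𝓝 x, DifferentiableAt ℝ u y :=
      (hu.eventually (by simp)).mono fun y hy => hy.differentiableAt two_ne_zero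
    filter_upwards [hlim.eventually hdiff] with t ht
    exact (ht.hasFDerivAt.comp_hasDerivAt t (hline t)).deriv
  have hderiv2 : deriv (deriv (u ∘ line)) 0 = fderiv ℝ (fun y => fderiv ℝ u y e) x e := by
    rw [hderiv.deriv_eq]
    have h := (differentiableAt_fderiv_apply hu e).hasFDerivAt
    exact (h.comp_hasDerivAt_of_eq 0 (hline 0) hline0.symm).deriv
  rw [← hderiv2]
  refine deriv_deriv_nonpos_of_isLocalMax ?_ ?_
  · filter_upwards [hlim.eventually hmax] with t ht
    simpa [hline0] using ht
  · exact hu.continuousAt.comp_of_eq (hline 0).continuousAt hline0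

variable {E : Type*} [NormedAddCommGroup E] [InnerProductSpace ℝ E] {u : E → ℝ} {x : E}

lemma contDiffAt_norm_rpow {n : WithTop ℕ∞} (p : ℝ) (hx : x ≠ 0) :
    ContDiffAt ℝ n (fun y : E => ‖y‖ ^ p) x :=
  (contDiffAt_norm ℝ hx).rpow_const_of_ne (norm_ne_zero_iff.2 hx)

lemma hasFDerivAt_norm_rpow_of_ne_zero (p : ℝ) (hx : x ≠ 0) :
    HasFDerivAt (fun y : E => ‖y‖ ^ p) ((p * ‖x‖ ^ (p - 2)) • innerSL ℝ x) x := by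
  have hpow (y : E) (q : ℝ) : ‖y‖ ^ q = (‖y‖ ^ 2) ^ (q / 2) := by
    rw [← Real.rpow_natCast_mul (norm_nonneg y)]
    congr 1
    push_cast
    ring
  simp only [hpow]
  have hsq := (hasStrictFDerivAt_norm_sq x).hasFDerivAt
  refine (hsq.rpow_const (p := p / 2) (.inl (by positivity))).congr_fderiv ?_
  rw [sub_div, div_self two_ne_zero]
  ext y
  simp
  ring

variable [FiniteDimensional ℝ E]

lemma laplacian_eq_sum_fderiv_fderiv {ι : Type*} [Fintype ι] (b : OrthonormalBasis ι ℝ E)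
    (hu : ContDiffAt ℝ 2 u x) :
    Δ u x = ∑ i, fderiv ℝ (fun y => fderiv ℝ u y (b i)) x (b i) := by
  have hdiff : DifferentiableAt ℝ (fderiv ℝ u) x :=
    (hu.fderiv_right (m := 1) le_rfl).differentiableAt one_ne_zero
  rw [laplacian_eq_iteratedFDeriv_orthonormalBasis u b]
  refine Finset.sum_congr rfl fun i _ => ?_
  rw [iteratedFDeriv_two_apply, fderiv_clm_apply hdiff (differentiableAt_const _)]
  simp

lemma lap_eq_laplacian {N : ℕ} {u : Euc N → ℝ} {x : Euc N} (hu : ContDiffAt ℝ 2 u x) :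
    lap N u x = Δ u x := by
  simp only [lap, laplacian_eq_sum_fderiv_fderiv (EuclideanSpace.basisFun (Fin N) ℝ) hu,
    EuclideanSpace.basisFun_apply]

lemma laplacian_nonpos_of_isLocalMax (hu : ContDiffAt ℝ 2 u x) (hmax : IsLocalMax u x) :
    Δ u x ≤ 0 := by
  rw [laplacian_eq_sum_fderiv_fderiv (stdOrthonormalBasis ℝ E) hu]
  exact Finset.sum_nonpos fun i _ => fderiv_fderiv_apply_nonpos_of_isLocalMax hu hmax _

lemma continuous_laplacian (hu : ContDiff ℝ 2 u) : Continuous (Δ u) := by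
  rw [laplacian_eq_iteratedFDeriv_stdOrthonormalBasis]
  have := hu.continuous_iteratedFDeriv (m := 2) le_rfl
  fun_prop

lemma laplacian_comp_smul (hu : ContDiff ℝ 2 u) (r : ℝ) (x : E) :
    Δ (fun y => u (r • y)) x = r ^ 2 * Δ u (r • x) := by
  have hcomp (e : E) : iteratedFDeriv ℝ 2 (fun y => u (r • y)) x ![e, e]
      = r ^ 2 * iteratedFDeriv ℝ 2 u (r • x) ![e, e] := by
    have h := (r • ContinuousLinearMap.id ℝ E).iteratedFDeriv_comp_right hu x (i := 2) le_rfl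
    have h' := DFunLike.congr_fun h ![e, e]
    simpa [Function.comp_def, ContinuousMultilinearMap.map_smul_univ] using h'
  simp only [laplacian_eq_iteratedFDeriv_stdOrthonormalBasis, hcomp, Finset.mul_sum]

lemma laplacian_norm_rpow (p : ℝ) (hx : x ≠ 0) :
    Δ (fun y : E => ‖y‖ ^ p) x = p * (p + Module.finrank ℝ E - 2) * ‖x‖ ^ (p - 2) := by
  set b := stdOrthonormalBasis ℝ E
  have hfderiv (e : E) : (fun y : E => fderiv ℝ (fun z : E => ‖z‖ ^ p) y e)
      =ᶠ[𝓝 x] fun y => p * (‖y‖ ^ (p - 2) * ⟪y, e⟫_ℝ) := by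
    filter_upwards [isOpen_ne.mem_nhds hx] with y hy
    rw [(hasFDerivAt_norm_rpow_of_ne_zero p hy).fderiv]
    simp [mul_assoc]
  have hterm (e : E) (he : ‖e‖ = 1) :
      fderiv ℝ (fun y : E => fderiv ℝ (fun z : E => ‖z‖ ^ p) y e) x e
      = p * ((p - 2) * ‖x‖ ^ (p - 2 - 2) * ⟪x, e⟫_ℝ ^ 2 + ‖x‖ ^ (p - 2)) := by
    have hinner : HasFDerivAt (fun y : E => ⟪y, e⟫_ℝ) (innerSL ℝ e) x :=
      (innerSL ℝ e).hasFDerivAt.congr_of_eventuallyEq (.of_forall fun y => real_inner_comm e y)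
    have hprod := ((hasFDerivAt_norm_rpow_of_ne_zero (p - 2) hx).fun_mul hinner).const_mul p
    rw [(hfderiv e).fderiv_eq, hprod.fderiv]
    simp [he]
    ring
  have hnorm : ‖x‖ ^ (p - 2 - 2) * ‖x‖ ^ 2 = ‖x‖ ^ (p - 2) := by
    rw [← Real.rpow_add_natCast (norm_ne_zero_iff.2 hx)]
    congr 1
    push_cast
    ring
  calc Δ (fun y : E => ‖y‖ ^ p) x
      = ∑ i, p * ((p - 2) * ‖x‖ ^ (p - 2 - 2) * ⟪x, b i⟫_ℝ ^ 2 + ‖x‖ ^ (p - 2)) := by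
        rw [laplacian_eq_sum_fderiv_fderiv b (contDiffAt_norm_rpow p hx)]
        exact Finset.sum_congr rfl fun i _ => hterm _ (b.norm_eq_one i)
    _ = p * ((p - 2) * (‖x‖ ^ (p - 2 - 2) * ‖x‖ ^ 2) + Module.finrank ℝ E * ‖x‖ ^ (p - 2)) := by
        rw [← Finset.mul_sum, Finset.sum_add_distrib, ← Finset.mul_sum, b.sum_sq_inner_left]
        simp [mul_assoc]
    _ = p * (p + Module.finrank ℝ E - 2) * ‖x‖ ^ (p - 2) := by
        rw [hnorm]
        ring

lemma laplacian_eventuallyEq_zero_of_eventuallyEq_const {c : ℝ} (hu : u =ᶠ[𝓝 x] fun _ => c) :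
    Δ u =ᶠ[𝓝 x] 0 := by
  simpa using laplacian_congr_nhds hu

lemma hasCompactSupport_laplacian (hu : HasCompactSupport u) : HasCompactSupport (Δ u) := by
  refine hu.mono' fun x hx => ?_
  contrapose! hx
  have hux : u =ᶠ[𝓝 x] fun _ => 0 := notMem_tsupport_iff_eventuallyEq.1 hx
  exact Function.notMem_support.2 (laplacian_eventuallyEq_zero_of_eventuallyEq_const hux).eq_of_nhds

lemma laplacian_comp_inv_smul_mul_norm_rpow (hu : ContDiff ℝ 2 u) {R : ℝ} (hR : 0 < R) (x : E) :
    Δ (fun y => u (R⁻¹ • y)) x * ‖x‖ ^ (2 - Module.finrank ℝ E : ℝ) =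
      (R ^ Module.finrank ℝ E)⁻¹ *
        (Δ u (R⁻¹ • x) * ‖R⁻¹ • x‖ ^ (2 - Module.finrank ℝ E : ℝ)) := by
  have hscale : R⁻¹ ^ (2 - Module.finrank ℝ E : ℝ) = R⁻¹ ^ 2 * R ^ Module.finrank ℝ E := by
    rw [Real.rpow_sub (inv_pos.2 hR), Real.rpow_natCast, Real.rpow_two,
      inv_pow R (Module.finrank ℝ E), div_inv_eq_mul]
  rw [laplacian_comp_smul hu, norm_smul, Real.norm_of_nonneg (inv_pos.2 hR).le,
    Real.mul_rpow (inv_pos.2 hR).le (norm_nonneg x), hscale]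
  field_simp

lemma norm_laplacian_comp_inv_smul_mul_le (hu : ContDiff ℝ 2 u) {R : ℝ} (hR : 0 < R) {c t : ℝ}
    (ht : Δ u (R⁻¹ • x) ≠ 0 → ‖t‖ ≤ c * ‖‖x‖ ^ (2 - Module.finrank ℝ E : ℝ)‖) :
    ‖Δ (fun y => u (R⁻¹ • y)) x * t‖ ≤ (R ^ Module.finrank ℝ E)⁻¹ *
      (c * ‖Δ u (R⁻¹ • x) * ‖R⁻¹ • x‖ ^ (2 - Module.finrank ℝ E : ℝ)‖) := by
  by_cases hzero : Δ u (R⁻¹ • x) = 0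
  · simp [laplacian_comp_smul hu, hzero]
  calc ‖Δ (fun y => u (R⁻¹ • y)) x * t‖
      = ‖Δ (fun y => u (R⁻¹ • y)) x‖ * ‖t‖ := norm_mul _ _
    _ ≤ ‖Δ (fun y => u (R⁻¹ • y)) x‖ * (c * ‖‖x‖ ^ (2 - Module.finrank ℝ E : ℝ)‖) := by
        gcongr
        exact ht hzero
    _ = c * ‖Δ (fun y => u (R⁻¹ • y)) x * ‖x‖ ^ (2 - Module.finrank ℝ E : ℝ)‖ := by
        rw [norm_mul]
        ring
    _ = _ := by
        rw [laplacian_comp_inv_smul_mul_norm_rpow hu hR, norm_mul,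
          Real.norm_of_nonneg (inv_nonneg.2 (pow_pos hR _).le), mul_left_comm]

end Laplacian

section CutoffEstimate

open Laplacian

lemma integral_mul_fderiv_eq_neg_fderiv_mul_of_hasCompactSupport {F : Type*}
    [NormedAddCommGroup F] [NormedSpace ℝ F] [FiniteDimensional ℝ F] [MeasurableSpace F]
    [BorelSpace F] {μ : Measure F} [μ.IsAddHaarMeasure] {φ u : F → ℝ} (hφ : ContDiff ℝ 1 φ)
    (hφc : HasCompactSupport φ) (hu : ContDiff ℝ 1 u) (e : F) :
    ∫ x, φ x * fderiv ℝ u x e ∂μ = -∫ x, fderiv ℝ φ x e * u x ∂μ := by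
  have hcont {h : F → ℝ} (hh : ContDiff ℝ 1 h) : Continuous fun x => fderiv ℝ h x e :=
    (hh.continuous_fderiv one_ne_zero).clm_apply continuous_const
  refine integral_mul_fderiv_eq_neg_fderiv_mul_of_integrable ?_ ?_ ?_
    (fun x _ => hφ.differentiable one_ne_zero x) (fun x _ => hu.differentiable one_ne_zero x)
  · exact ((hcont hφ).mul hu.continuous).integrable_of_hasCompactSupport
      (hφc.fderiv_apply ℝ e).mul_right
  · exact (hφ.continuous.mul (hcont hu)).integrable_of_hasCompactSupport hφc.mul_right
  · exact (hφ.continuous.mul hu.continuous).integrable_of_hasCompactSupport hφc.mul_right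

variable {E : Type*} [NormedAddCommGroup E] [InnerProductSpace ℝ E] [FiniteDimensional ℝ E]
  [MeasurableSpace E] [BorelSpace E] {μ : Measure E} [μ.IsAddHaarMeasure]

theorem integral_mul_laplacian_eq_integral_laplacian_mul {φ u : E → ℝ} (hφ : ContDiff ℝ 2 φ)
    (hφc : HasCompactSupport φ) (hu : ContDiff ℝ 2 u) :
    ∫ x, φ x * Δ u x ∂μ = ∫ x, Δ φ x * u x ∂μ := by
  set b := stdOrthonormalBasis ℝ E
  have hcont {h : E → ℝ} (hh : ContDiff ℝ 2 h) (e : E) :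
      Continuous fun x => fderiv ℝ (fun y => fderiv ℝ h y e) x e :=
    ((contDiff_fderiv_apply hh e).continuous_fderiv one_ne_zero).clm_apply continuous_const
  simp only [laplacian_eq_sum_fderiv_fderiv b hφ.contDiffAt,
    laplacian_eq_sum_fderiv_fderiv b hu.contDiffAt, Finset.mul_sum, Finset.sum_mul]
  rw [integral_finsetSum, integral_finsetSum]
  · refine Finset.sum_congr rfl fun i _ => ?_
    rw [integral_mul_fderiv_eq_neg_fderiv_mul_of_hasCompactSupport (hφ.of_le one_le_two) hφc
        (contDiff_fderiv_apply hu _),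
      integral_mul_fderiv_eq_neg_fderiv_mul_of_hasCompactSupport (contDiff_fderiv_apply hφ _)
        (hφc.fderiv_apply ℝ _) (hu.of_le one_le_two), neg_neg]
  · exact fun i _ => ((hcont hφ _).mul hu.continuous).integrable_of_hasCompactSupport
      ((hφc.fderiv_apply ℝ _).fderiv_apply ℝ _).mul_right
  · exact fun i _ =>
      (hφ.continuous.mul (hcont hu _)).integrable_of_hasCompactSupport hφc.mul_right

lemma integrable_laplacian_mul_norm_rpow {φ : E → ℝ} (hφ : ContDiff ℝ 2 φ)
    (hφc : HasCompactSupport φ) (hφ0 : Δ φ =ᶠ[𝓝 0] 0) (p : ℝ) :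
    Integrable (fun x => Δ φ x * ‖x‖ ^ p) μ := by
  refine Continuous.integrable_of_hasCompactSupport ?_
    (hasCompactSupport_laplacian hφc).mul_right
  refine continuous_iff_continuousAt.2 fun x => ?_
  rcases eq_or_ne x 0 with rfl | hx
  · refine continuousAt_const.congr (f := fun _ => (0 : ℝ)) ?_
    filter_upwards [hφ0] with x hx
    simp [hx]
  · exact (continuous_laplacian hφ).continuousAt.mul
      (contDiffAt_norm_rpow (n := 0) p hx).continuousAt

/- The exponent `2 - finrank ℝ E` is the scale-invariant one: the majorant of the integrand is the
dilate of a fixed integrable function, so its integral does not depend on `R`. -/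
lemma exists_eventually_integral_laplacian_comp_inv_smul_mul_le {φ u : E → ℝ}
    (hφ : ContDiff ℝ 2 φ) (hφc : HasCompactSupport φ) (hφ0 : Δ φ =ᶠ[𝓝 0] 0)
    (hu : u =O[cocompact E] fun x => ‖x‖ ^ (2 - Module.finrank ℝ E : ℝ)) :
    ∃ C, ∀ᶠ R : ℝ in atTop, ∫ x, Δ (fun y => φ (R⁻¹ • y)) x * u x ∂μ ≤ C := by
  set ψ : E → ℝ := fun x => Δ φ x * ‖x‖ ^ (2 - Module.finrank ℝ E : ℝ)
  have hψ : Integrable ψ μ := integrable_laplacian_mul_norm_rpow hφ hφc hφ0 _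
  obtain ⟨c, hc⟩ := hu.bound
  rw [← cobounded_eq_cocompact] at hc
  obtain ⟨R₀, -, hR₀⟩ := hasBasis_cobounded_norm.eventually_iff.1 hc
  obtain ⟨r, hr, hr0⟩ := Metric.eventually_nhds_iff.1 hφ0
  refine ⟨∫ x, c * ‖ψ x‖ ∂μ, ?_⟩
  filter_upwards [eventually_gt_atTop 0, eventually_ge_atTop (R₀ / r)] with R hR hRR₀
  have hbound (x : E) : ‖Δ (fun y => φ (R⁻¹ • y)) x * u x‖
      ≤ (R ^ Module.finrank ℝ E)⁻¹ * (c * ‖ψ (R⁻¹ • x)‖) := by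
    refine norm_laplacian_comp_inv_smul_mul_le hφ hR fun hx => hR₀ ?_
    have hxr : r ≤ R⁻¹ * ‖x‖ := by
      contrapose! hx
      refine hr0 ?_
      rwa [dist_zero_right, norm_smul, Real.norm_of_nonneg (inv_pos.2 hR).le]
    rw [inv_mul_eq_div, le_div_iff₀ hR] at hxr
    rw [div_le_iff₀ hr] at hRR₀
    exact hRR₀.trans ((mul_comm R r).trans_le hxr)
  calc ∫ x, Δ (fun y => φ (R⁻¹ • y)) x * u x ∂μ
      ≤ ‖∫ x, Δ (fun y => φ (R⁻¹ • y)) x * u x ∂μ‖ := Real.le_norm_self _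
    _ ≤ ∫ x, (R ^ Module.finrank ℝ E)⁻¹ * (c * ‖ψ (R⁻¹ • x)‖) ∂μ :=
        norm_integral_le_of_norm_le
          (((hψ.comp_smul (inv_ne_zero hR.ne')).norm.const_mul _).const_mul _) (.of_forall hbound)
    _ = ∫ x, c * ‖ψ x‖ ∂μ := by
        rw [integral_const_mul,
          Measure.integral_comp_inv_smul_of_nonneg μ (fun x => c * ‖ψ x‖) hR.le, smul_eq_mul,
          inv_mul_cancel_left₀ (pow_pos hR _).ne']

lemma setIntegral_le_integral_mul {X : Type*} [MeasurableSpace X] {ν : Measure X} {s : Set X}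
    {φ F : X → ℝ} (hs : MeasurableSet s) (hφ : 0 ≤ φ) (hφs : EqOn φ 1 s) (hF : 0 ≤ F)
    (hint : Integrable (fun x => φ x * F x) ν) :
    ∫ x in s, F x ∂ν ≤ ∫ x, φ x * F x ∂ν :=
  calc ∫ x in s, F x ∂ν
      = ∫ x in s, φ x * F x ∂ν := setIntegral_congr_fun hs fun x hx => by simp [hφs hx]
    _ ≤ ∫ x, φ x * F x ∂ν :=
        setIntegral_le_integral hint (.of_forall fun x => mul_nonneg (hφ x) (hF x))

lemma integral_mul_le_integral_laplacian_mul_add {φ F g u : E → ℝ} (hφ : ContDiff ℝ 2 φ)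
    (hφc : HasCompactSupport φ) (hφ0 : 0 ≤ φ) (hφ1 : φ ≤ 1) (hF : Continuous F)
    (hg : Integrable g μ) (hu : ContDiff ℝ 2 u) (h : ∀ x, F x ≤ Δ u x + g x) :
    ∫ x, φ x * F x ∂μ ≤ ∫ x, Δ φ x * u x ∂μ + ∫ x, |g x| ∂μ := by
  have hint {v : E → ℝ} (hv : Continuous v) : Integrable (fun x => φ x * v x) μ :=
    (hφ.continuous.mul hv).integrable_of_hasCompactSupport hφc.mul_right
  have hΔ := hint (continuous_laplacian hu)
  calc ∫ x, φ x * F x ∂μ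
      ≤ ∫ x, φ x * Δ u x + |g x| ∂μ := by
        refine integral_mono (hint hF) (hΔ.add hg.abs) fun x => ?_
        have hφg : φ x * g x ≤ |g x| := calc
          φ x * g x ≤ φ x * |g x| := mul_le_mul_of_nonneg_left (le_abs_self _) (hφ0 x)
          _ ≤ |g x| := mul_le_of_le_one_left (abs_nonneg _) (hφ1 x)
        linarith [mul_le_mul_of_nonneg_left (h x) (hφ0 x)]
    _ = ∫ x, Δ φ x * u x ∂μ + ∫ x, |g x| ∂μ := by
        rw [integral_add hΔ hg.abs, integral_mul_laplacian_eq_integral_laplacian_mul hφ hφc hu]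

lemma exists_contDiff_hasCompactSupport_eqOn_one_ball (F : Type*) [NormedAddCommGroup F]
    [NormedSpace ℝ F] [FiniteDimensional ℝ F] :
    ∃ φ : F → ℝ, ContDiff ℝ 2 φ ∧ HasCompactSupport φ ∧ 0 ≤ φ ∧ φ ≤ 1 ∧ EqOn φ 1 (ball 0 1) := by
  let χ : ContDiffBump (0 : F) := ⟨1, 2, one_pos, one_lt_two⟩
  exact ⟨χ, χ.contDiff, χ.hasCompactSupport, fun _ => χ.nonneg, fun _ => χ.le_one,
    fun _ hx => χ.one_of_mem_closedBall (ball_subset_closedBall hx)⟩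

theorem integrable_of_le_laplacian_add {F g u : E → ℝ} (hF : Continuous F) (hF0 : 0 ≤ F)
    (hg : Integrable g μ) (hu : ContDiff ℝ 2 u)
    (hO : u =O[cocompact E] fun x => ‖x‖ ^ (2 - Module.finrank ℝ E : ℝ))
    (h : ∀ x, F x ≤ Δ u x + g x) : Integrable F μ := by
  obtain ⟨φ, hφ, hφc, hφ0, hφ1, hφball⟩ := exists_contDiff_hasCompactSupport_eqOn_one_ball E
  have hΔφ : Δ φ =ᶠ[𝓝 0] 0 := laplacian_eventuallyEq_zero_of_eventuallyEq_const
    (hφball.eventuallyEq_of_mem (ball_mem_nhds 0 one_pos))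
  obtain ⟨C, hC⟩ :=
    exists_eventually_integral_laplacian_comp_inv_smul_mul_le (μ := μ) hφ hφc hΔφ hO
  refine (aecover_ball (x := (0 : E)) tendsto_id).integrable_of_integral_bounded_of_nonneg_ae
    (l := atTop) (C + ∫ x, |g x| ∂μ) (fun R => ?_) (.of_forall hF0) ?_
  · exact (hF.continuousOn.integrableOn_compact (isCompact_closedBall 0 R)).mono_set
      ball_subset_closedBall
  filter_upwards [hC, eventually_gt_atTop 0] with R hCR hR
  set φR : E → ℝ := fun x => φ (R⁻¹ • x)
  have hφR : ContDiff ℝ 2 φR := by fun_prop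
  have hφR0 : 0 ≤ φR := fun x => hφ0 (R⁻¹ • x)
  have hφRc : HasCompactSupport φR := hφc.comp_smul (inv_ne_zero hR.ne')
  have hone : EqOn φR 1 (ball 0 R) := fun x hx => hφball <| by
    rw [mem_ball_zero_iff] at hx ⊢
    rwa [norm_smul, Real.norm_of_nonneg (inv_pos.2 hR).le, inv_mul_lt_one₀ hR]
  calc ∫ x in ball 0 R, F x ∂μ
      ≤ ∫ x, φR x * F x ∂μ :=
        setIntegral_le_integral_mul measurableSet_ball hφR0 hone hF0
          ((hφR.continuous.mul hF).integrable_of_hasCompactSupport hφRc.mul_right)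
    _ ≤ ∫ x, Δ φR x * u x ∂μ + ∫ x, |g x| ∂μ :=
        integral_mul_le_integral_laplacian_mul_add hφR hφRc hφR0
          (fun x => hφ1 (R⁻¹ • x)) hF hg hu h
    _ ≤ C + ∫ x, |g x| ∂μ := by gcongr

end CutoffEstimate

section Decay

open Laplacian InnerProductSpace

lemma exists_forall_le_div_mul_of_eventually_le {X : Type*} [TopologicalSpace X] {S : Set X}
    {w ψ : X → ℝ} {x₀ : X} (hS : IsClosed S)
    (hw : ContinuousOn w S) (hψ : ContinuousOn ψ S) (hψ1 : ∀ x ∈ S, 1 ≤ ψ x) (hx₀ : x₀ ∈ S)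
    (hwx₀ : 0 < w x₀) (hlim : ∀ ε > 0, ∀ᶠ x in cocompact X, x ∈ S → w x ≤ ε) :
    ∃ y ∈ S, 0 < w y ∧ ∀ x ∈ S, w x ≤ w y / ψ y * ψ x := by
  have hψ0 (x : X) (hx : x ∈ S) : 0 < ψ x := one_pos.trans_le (hψ1 x hx)
  have hfar : ∀ᶠ x in cocompact X ⊓ 𝓟 S, w x / ψ x ≤ w x₀ / ψ x₀ := by
    rw [eventually_inf_principal]
    filter_upwards [hlim _ (div_pos hwx₀ (hψ0 x₀ hx₀))] with x hx hxS
    refine (div_le_iff₀ (hψ0 x hxS)).2 ((hx hxS).trans ?_)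
    exact le_mul_of_one_le_right (div_pos hwx₀ (hψ0 x₀ hx₀)).le (hψ1 x hxS)
  obtain ⟨y, hyS, hy⟩ :=
    (hw.div hψ fun x hx => (hψ0 x hx).ne').exists_isMaxOn' hS hx₀ hfar
  refine ⟨y, hyS, ?_, fun x hx => (div_le_iff₀ (hψ0 x hx)).1 (hy hx)⟩
  have hpos : 0 < w y / ψ y := (div_pos hwx₀ (hψ0 x₀ hx₀)).trans_le (hy hx₀)
  exact (div_pos_iff_of_pos_right (hψ0 y hyS)).1 hpos

variable {E : Type*} [NormedAddCommGroup E] [InnerProductSpace ℝ E]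

/-- The comparison function of order `‖x‖ ^ (2 - d)`, `d` the dimension, for
`-Δ u = k u` near infinity: the fundamental solution of the Laplacian, made strictly superharmonic
by a correction of lower order. -/
def radialBarrier (δ : ℝ) (x : E) : ℝ :=
  ‖x‖ ^ (2 - Module.finrank ℝ E : ℝ) - ‖x‖ ^ (2 - Module.finrank ℝ E - δ : ℝ)

lemma radialBarrier_pos {δ : ℝ} {x : E} (hδ : 0 < δ) (hx : 1 < ‖x‖) : 0 < radialBarrier δ x :=
  sub_pos.2 (Real.rpow_lt_rpow_of_exponent_lt hx (by linarith))

lemma radialBarrier_le_norm_rpow (δ : ℝ) (x : E) :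
    radialBarrier δ x ≤ ‖x‖ ^ (2 - Module.finrank ℝ E : ℝ) :=
  sub_le_self _ (by positivity)

lemma contDiffAt_radialBarrier (δ : ℝ) {x : E} (hx : x ≠ 0) : ContDiffAt ℝ 2 (radialBarrier δ) x :=
  (contDiffAt_norm_rpow _ hx).sub (contDiffAt_norm_rpow _ hx)

variable [FiniteDimensional ℝ E]

/- Dividing by the strict supersolution `ψ` removes the zeroth-order term, whose sign is the wrong
one for the classical maximum principle. -/
theorem nonpos_of_neg_mul_le_laplacian {S : Set E} {w ψ k : E → ℝ} (hS : IsClosed S)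
    (hw : ContinuousOn w S) (hw2 : ∀ x ∈ interior S, ContDiffAt ℝ 2 w x)
    (hψ : ContinuousOn ψ S) (hψ2 : ∀ x ∈ interior S, ContDiffAt ℝ 2 ψ x)
    (hψ1 : ∀ x ∈ S, 1 ≤ ψ x) (hΔψ : ∀ x ∈ interior S, Δ ψ x < -(k x * ψ x))
    (hΔw : ∀ x ∈ interior S, -(k x * w x) ≤ Δ w x) (hfr : ∀ x ∈ frontier S, w x ≤ 0)
    (hlim : ∀ ε > 0, ∀ᶠ x in cocompact E, x ∈ S → w x ≤ ε) : ∀ x ∈ S, w x ≤ 0 := by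
  by_contra! ⟨x₀, hx₀, hwx₀⟩
  obtain ⟨y, hyS, hwy, hmax⟩ :=
    exists_forall_le_div_mul_of_eventually_le hS hw hψ hψ1 hx₀ hwx₀ hlim
  have hyint : y ∈ interior S := by
    by_contra hy
    exact (hfr y (hS.frontier_eq ▸ ⟨hyS, hy⟩)).not_gt hwy
  have hψy : 0 < ψ y := one_pos.trans_le (hψ1 y hyS)
  set M : ℝ := w y / ψ y
  have hM : M * ψ y = w y := div_mul_cancel₀ _ hψy.ne'
  have hloc : IsLocalMax (w - M • ψ) y := by
    filter_upwards [mem_interior_iff_mem_nhds.1 hyint] with x hx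
    simpa [hM] using hmax x hx
  have hcritical : Δ w y - M * Δ ψ y ≤ 0 := by
    have hMψ : ContDiffAt ℝ 2 (M • ψ) y := contDiffAt_const.smul (hψ2 y hyint)
    have h : Δ (w - M • ψ) y ≤ 0 :=
      laplacian_nonpos_of_isLocalMax ((hw2 y hyint).sub hMψ) hloc
    rwa [(hw2 y hyint).laplacian_sub hMψ, laplacian_smul M (hψ2 y hyint)] at h
  have hstrict : M * Δ ψ y < -(k y * w y) := calc
    M * Δ ψ y < M * -(k y * ψ y) := mul_lt_mul_of_pos_left (hΔψ y hyint) (div_pos hwy hψy)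
    _ = -(k y * w y) := by rw [← hM]; ring
  linarith [hΔw y hyint]

lemma laplacian_one_add_norm_rpow_lt {k δ : ℝ} {x : E} (hδ : 0 < δ) (hx : 1 ≤ ‖x‖) (hk0 : 0 ≤ k)
    (hk : 2 * k < δ * (Module.finrank ℝ E - 2 - δ) * ‖x‖ ^ (-δ - 2)) :
    Δ (fun y : E => 1 + ‖y‖ ^ (-δ)) x < -(k * (1 + ‖x‖ ^ (-δ))) := by
  have hx0 : x ≠ 0 := norm_pos_iff.1 (one_pos.trans_le hx)
  have hle : ‖x‖ ^ (-δ) ≤ 1 := Real.rpow_le_one_of_one_le_of_nonpos hx (by linarith)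
  have hΔ : Δ (fun y : E => 1 + ‖y‖ ^ (-δ)) x
      = -(δ * (Module.finrank ℝ E - 2 - δ) * ‖x‖ ^ (-δ - 2)) := by
    have h := contDiffAt_const (c := (1 : ℝ)).laplacian_add (contDiffAt_norm_rpow (-δ) hx0)
    refine h.trans ?_
    rw [laplacian_const, laplacian_norm_rpow _ hx0, Pi.zero_apply]
    ring
  rw [hΔ]
  nlinarith [mul_le_mul_of_nonneg_left hle hk0]

lemma laplacian_radialBarrier_le {k δ : ℝ} {x : E} (hx : x ≠ 0) (hk0 : 0 ≤ k)
    (hk : k ≤ δ * (Module.finrank ℝ E - 2 + δ) * ‖x‖ ^ (-δ - 2)) :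
    Δ (radialBarrier δ : E → ℝ) x ≤ -(k * radialBarrier δ x) := by
  set d : ℝ := (Module.finrank ℝ E : ℝ)
  have hΔ : Δ (radialBarrier δ : E → ℝ) x = -(δ * (d - 2 + δ) * ‖x‖ ^ (-d - δ)) := by
    have h := (contDiffAt_norm_rpow (n := 2) (2 - d) hx).laplacian_sub
      (contDiffAt_norm_rpow (2 - d - δ) hx)
    refine h.trans ?_
    rw [laplacian_norm_rpow _ hx, laplacian_norm_rpow _ hx,
      show 2 - d - δ - 2 = -d - δ by ring]
    ring
  rw [hΔ, neg_le_neg_iff]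
  calc k * radialBarrier δ x
      ≤ k * ‖x‖ ^ (2 - d) := mul_le_mul_of_nonneg_left (radialBarrier_le_norm_rpow δ x) hk0
    _ ≤ δ * (d - 2 + δ) * ‖x‖ ^ (-δ - 2) * ‖x‖ ^ (2 - d) := by gcongr
    _ = δ * (d - 2 + δ) * ‖x‖ ^ (-d - δ) := by
        rw [mul_assoc, ← Real.rpow_add (norm_pos_iff.2 hx)]
        ring_nf

lemma le_mul_radialBarrier_of_neg_mul_le_laplacian {u k : E → ℝ} {δ R C : ℝ} (hδ : 0 < δ)
    (hR : 1 < R) (hC : 0 ≤ C) (hu : ContDiff ℝ 2 u) (hlim : Tendsto u (cocompact E) (𝓝 0))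
    (hk0 : ∀ x, 0 ≤ k x)
    (hk : ∀ x, R ≤ ‖x‖ → 2 * k x < δ * (Module.finrank ℝ E - 2 - δ) * ‖x‖ ^ (-δ - 2))
    (hΔu : ∀ x, R ≤ ‖x‖ → -(k x * u x) ≤ Δ u x)
    (hsphere : ∀ x, ‖x‖ = R → u x ≤ C * radialBarrier δ x) :
    ∀ x, R ≤ ‖x‖ → u x ≤ C * radialBarrier δ x := by
  have hmem {x : E} : x ∈ (ball (0 : E) R)ᶜ ↔ R ≤ ‖x‖ := by simp
  have hint {x : E} (hx : x ∈ interior (ball (0 : E) R)ᶜ) : R ≤ ‖x‖ := hmem.1 (interior_subset hx)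
  have hne {x : E} (hx : R ≤ ‖x‖) : x ≠ 0 := norm_pos_iff.1 (by linarith)
  have hbarrier {x : E} (hx : R ≤ ‖x‖) : ContDiffAt ℝ 2 (C • radialBarrier δ) x :=
    contDiffAt_const.smul (contDiffAt_radialBarrier δ (hne hx))
  have hψ {x : E} (hx : R ≤ ‖x‖) : ContDiffAt ℝ 2 (fun y : E => 1 + ‖y‖ ^ (-δ)) x :=
    contDiffAt_const.add (contDiffAt_norm_rpow _ (hne hx))
  have hw {x : E} (hx : R ≤ ‖x‖) : ContDiffAt ℝ 2 (u - C • radialBarrier δ : E → ℝ) x :=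
    hu.contDiffAt.sub (hbarrier hx)
  suffices h : ∀ x ∈ (ball (0 : E) R)ᶜ, (u - C • radialBarrier δ : E → ℝ) x ≤ 0 from
    fun x hx => sub_nonpos.1 (h x (hmem.2 hx))
  refine nonpos_of_neg_mul_le_laplacian (ψ := fun y => 1 + ‖y‖ ^ (-δ)) (k := k)
    isOpen_ball.isClosed_compl (fun x hx => (hw (hmem.1 hx)).continuousAt.continuousWithinAt)
    (fun x hx => hw (hint hx)) (fun x hx => (hψ (hmem.1 hx)).continuousAt.continuousWithinAt)
    (fun x hx => hψ (hint hx)) (fun x _ => le_add_of_nonneg_right (by positivity))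
    (fun x hx => laplacian_one_add_norm_rpow_lt hδ (hR.le.trans (hint hx)) (hk0 x) (hk x (hint hx)))
    (fun x hx => ?_) (fun x hx => ?_) (fun ε hε => ?_)
  · have hx' := hint hx
    have hkx : k x ≤ δ * (Module.finrank ℝ E - 2 + δ) * ‖x‖ ^ (-δ - 2) := by
      have : 0 ≤ δ * δ * ‖x‖ ^ (-δ - 2) := by positivity
      linarith [hk0 x, hk x hx']
    have hbar := mul_le_mul_of_nonneg_left (laplacian_radialBarrier_le (hne hx') (hk0 x) hkx) hC
    rw [hu.contDiffAt.laplacian_sub (hbarrier hx'),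
      laplacian_smul C (contDiffAt_radialBarrier δ (hne hx'))]
    simp only [Pi.sub_apply, Pi.smul_apply, smul_eq_mul]
    linarith [hΔu x hx']
  · rw [frontier_compl, frontier_ball _ (by positivity), mem_sphere_zero_iff_norm] at hx
    exact sub_nonpos.2 (hsphere x hx)
  · filter_upwards [hlim.eventually_le_const hε] with x hux hx
    have := mul_nonneg hC (radialBarrier_pos hδ (hR.trans_le (hmem.1 hx))).le
    exact (sub_le_self _ this).trans hux

lemma eventually_cocompact_mul_norm_rpow_lt {p q C c : ℝ} (hpq : p < q) (hc : 0 < c) :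
    ∀ᶠ x in cocompact E, C * ‖x‖ ^ p < c * ‖x‖ ^ q := by
  have hlim : Tendsto (fun x : E => C * ‖x‖ ^ (-(q - p))) (cocompact E) (𝓝 (C * 0)) :=
    ((tendsto_rpow_neg_atTop (sub_pos.2 hpq)).comp tendsto_norm_cocompact_atTop).const_mul C
  rw [mul_zero] at hlim
  filter_upwards [hlim.eventually_lt_const hc,
    (tendsto_norm_cocompact_atTop (E := E)).eventually_gt_atTop 0] with x hx hx0
  calc C * ‖x‖ ^ p = C * ‖x‖ ^ (-(q - p)) * ‖x‖ ^ q := by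
        rw [mul_assoc, ← Real.rpow_add hx0]
        ring_nf
    _ < c * ‖x‖ ^ q := by gcongr

lemma exists_le_mul_radialBarrier_on_sphere {u : E → ℝ} (hu : Continuous u) {δ R : ℝ} (hδ : 0 < δ)
    (hR : 1 < R) : ∃ C, 0 ≤ C ∧ ∀ x, ‖x‖ = R → u x ≤ C * radialBarrier δ x := by
  have hpos {x : E} (hx : ‖x‖ = R) : 0 < radialBarrier δ x := radialBarrier_pos hδ (hx ▸ hR)
  have hcont : ContinuousOn (fun x => u x / radialBarrier δ x) (sphere (0 : E) R) := by
    intro x hx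
    rw [mem_sphere_zero_iff_norm] at hx
    have hx0 : x ≠ 0 := norm_pos_iff.1 (by linarith)
    exact (hu.continuousAt.div (contDiffAt_radialBarrier δ hx0).continuousAt
      (hpos hx).ne').continuousWithinAt
  obtain ⟨C, hC⟩ := (isCompact_sphere (0 : E) R).exists_bound_of_continuousOn hcont
  refine ⟨|C|, abs_nonneg C, fun x hx => (div_le_iff₀ (hpos hx)).1 ?_⟩
  exact (Real.le_norm_self _).trans ((hC x (mem_sphere_zero_iff_norm.2 hx)).trans (le_abs_self C))

lemma isBigO_norm_rpow_of_neg_mul_le_laplacian_of_two_lt_finrank {u : E → ℝ} {K α : ℝ}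
    (hd : 2 < Module.finrank ℝ E) (hu : ContDiff ℝ 2 u) (hu0 : 0 ≤ u)
    (hlim : Tendsto u (cocompact E) (𝓝 0)) (hK : 0 ≤ K) (hα : 0 < α)
    (h : ∀ᶠ x in cocompact E, -(K * ‖x‖ ^ (-2 - α) * u x) ≤ Δ u x) :
    u =O[cocompact E] fun x => ‖x‖ ^ (2 - Module.finrank ℝ E : ℝ) := by
  obtain ⟨δ, hδ, hδα⟩ := exists_between (lt_min hα one_half_pos)
  have hδd : 0 < δ * (Module.finrank ℝ E - 2 - δ) := by
    have : (3 : ℝ) ≤ Module.finrank ℝ E := by exact_mod_cast hd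
    have := hδα.trans_le (min_le_right _ _)
    exact mul_pos hδ (by linarith)
  have hev : ∀ᶠ x in Bornology.cobounded E, -(K * ‖x‖ ^ (-2 - α) * u x) ≤ Δ u x ∧
      2 * K * ‖x‖ ^ (-2 - α) < δ * (Module.finrank ℝ E - 2 - δ) * ‖x‖ ^ (-δ - 2) := by
    rw [cobounded_eq_cocompact]
    have := hδα.trans_le (min_le_left _ _)
    exact h.and (eventually_cocompact_mul_norm_rpow_lt (by linarith) hδd)
  obtain ⟨R₀, -, hR₀⟩ := hasBasis_cobounded_norm.eventually_iff.1 hev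
  obtain ⟨R, hR1, hRR₀⟩ : ∃ R, 1 < R ∧ R₀ ≤ R :=
    ((eventually_gt_atTop 1).and (eventually_ge_atTop R₀)).exists
  obtain ⟨C, hC, hsphere⟩ := exists_le_mul_radialBarrier_on_sphere hu.continuous hδ hR1
  have hle : ∀ x, R ≤ ‖x‖ → u x ≤ C * radialBarrier δ x :=
    le_mul_radialBarrier_of_neg_mul_le_laplacian hδ hR1 hC hu hlim (fun x => by positivity)
      (fun x hx => (mul_assoc 2 K _).symm.trans_lt (hR₀ (hRR₀.trans hx)).2)
      (fun x hx => (hR₀ (hRR₀.trans hx)).1) hsphere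
  refine .of_bound C ?_
  filter_upwards [(tendsto_norm_cocompact_atTop (E := E)).eventually_ge_atTop R] with x hx
  rw [Real.norm_of_nonneg (hu0 x), Real.norm_of_nonneg (by positivity)]
  exact (hle x hx).trans (mul_le_mul_of_nonneg_left (radialBarrier_le_norm_rpow δ x) hC)

theorem isBigO_norm_rpow_of_neg_mul_le_laplacian {u : E → ℝ} {K α : ℝ}
    (hu : ContDiff ℝ 2 u) (hu0 : 0 ≤ u) (hlim : Tendsto u (cocompact E) (𝓝 0)) (hK : 0 ≤ K)
    (hα : 0 < α) (h : ∀ᶠ x in cocompact E, -(K * ‖x‖ ^ (-2 - α) * u x) ≤ Δ u x) :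
    u =O[cocompact E] fun x => ‖x‖ ^ (2 - Module.finrank ℝ E : ℝ) := by
  rcases lt_or_ge 2 (Module.finrank ℝ E) with hd | hd
  · exact isBigO_norm_rpow_of_neg_mul_le_laplacian_of_two_lt_finrank hd hu hu0 hlim hK hα h
  refine (hlim.isBigO_one ℝ).trans (.of_bound 1 ?_)
  filter_upwards [(tendsto_norm_cocompact_atTop (E := E)).eventually_ge_atTop 1] with x hx
  have hd' : (Module.finrank ℝ E : ℝ) ≤ 2 := by exact_mod_cast hd
  rw [one_mul, norm_one]
  exact (Real.one_le_rpow hx (sub_nonneg.2 hd')).trans (Real.le_norm_self _)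

end Decay

section Integrability

open Laplacian

variable {E : Type*} [NormedAddCommGroup E] [InnerProductSpace ℝ E] [FiniteDimensional ℝ E]
  [MeasurableSpace E] [BorelSpace E] {μ : Measure E} [μ.IsAddHaarMeasure]

lemma integrable_of_isBigO_norm_rpow {g : E → ℝ} {s : ℝ} (hg : Continuous g)
    (hs : s < -Module.finrank ℝ E) (hO : g =O[cocompact E] fun x => ‖x‖ ^ s) : Integrable g μ := by
  have h1 : Integrable (fun x : E => (1 + ‖x‖) ^ (- -s)) μ :=
    integrable_one_add_norm (by linarith)
  refine (hg.locallyIntegrable (μ := μ)).integrable_of_isBigO_cocompact (hO.trans ?_)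
    (h1.integrableAtFilter _)
  refine .of_bound (2 ^ (-s)) ?_
  filter_upwards [(tendsto_norm_cocompact_atTop (E := E)).eventually_ge_atTop 1] with x hx
  rw [neg_neg, Real.norm_of_nonneg (by positivity), Real.norm_of_nonneg (by positivity)]
  have hs0 : s ≤ 0 := hs.le.trans (neg_nonpos.2 (Nat.cast_nonneg _))
  calc ‖x‖ ^ s = 2 ^ (-s) * (2 * ‖x‖) ^ s := by
        rw [Real.mul_rpow two_pos.le (norm_nonneg x), ← mul_assoc, ← Real.rpow_add two_pos]
        simp
    _ ≤ 2 ^ (-s) * (1 + ‖x‖) ^ s := by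
        gcongr ?_ * ?_
        exact Real.rpow_le_rpow_of_nonpos (by positivity) (by linarith) hs0

theorem integrable_sq_of_mul_sq_le_laplacian_add {u : E → ℝ} {c K α : ℝ} (hu : ContDiff ℝ 2 u)
    (hu0 : 0 ≤ u) (hlim : Tendsto u (cocompact E) (𝓝 0)) (hc : 0 < c) (hK : 0 ≤ K) (hα : 0 < α)
    (h : ∀ᶠ x in cocompact E, c * u x ^ 2 ≤ Δ u x + K * ‖x‖ ^ (-2 - α) * u x) :
    Integrable (fun x => u x ^ 2) μ := by
  have hO : u =O[cocompact E] fun x => ‖x‖ ^ (2 - Module.finrank ℝ E : ℝ) := by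
    refine isBigO_norm_rpow_of_neg_mul_le_laplacian hu hu0 hlim hK hα ?_
    filter_upwards [h] with x hx
    linarith [mul_nonneg hc.le (sq_nonneg (u x))]
  set g : E → ℝ := fun x => max (c * u x ^ 2 - Δ u x) 0
  have hg : Continuous g :=
    ((hu.continuous.pow 2).const_mul c |>.sub (continuous_laplacian hu)).max continuous_const
  have hgO : g =O[cocompact E] fun x => ‖x‖ ^ (-Module.finrank ℝ E - α : ℝ) := by
    have hgu : g =O[cocompact E] fun x => ‖x‖ ^ (-2 - α) * u x := by
      refine .of_bound K ?_
      filter_upwards [h] with x hx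
      have hux : 0 ≤ ‖x‖ ^ (-2 - α) * u x := mul_nonneg (by positivity) (hu0 x)
      rw [Real.norm_of_nonneg (le_max_right _ _), Real.norm_of_nonneg hux]
      exact max_le (by linarith) (mul_nonneg hK hux)
    refine (hgu.trans ((Asymptotics.isBigO_refl _ _).mul hO)).trans_eventuallyEq ?_
    filter_upwards [(tendsto_norm_cocompact_atTop (E := E)).eventually_gt_atTop 0] with x hx
    rw [← Real.rpow_add hx]
    ring_nf
  have hgint : Integrable g μ := integrable_of_isBigO_norm_rpow hg (by linarith) hgO
  have hF : Integrable (fun x => c * u x ^ 2) μ :=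
    integrable_of_le_laplacian_add (continuous_const.mul (hu.continuous.pow 2))
      (fun x => by positivity) hgint hu hO fun x => by
        linarith [le_max_left (c * u x ^ 2 - Δ u x) 0]
  exact (integrable_const_mul_iff (isUnit_iff_ne_zero.2 hc.ne') _).1 hF

theorem stmt10_general {V u : E → ℝ} {f : ℝ → ℝ} {lam A α c : ℝ} (hlam : 0 < lam) (hA : 0 ≤ A)
    (hα : 0 < α) (hV : ∀ᶠ x in cocompact E, V x ≤ A * ‖x‖ ^ (-2 - α)) (hc : 0 < c)
    (hf : ∀ᶠ t in 𝓝[≥] 0, c * t ^ 2 ≤ f t) (hu : ContDiff ℝ 2 u) (hu0 : 0 ≤ u)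
    (hlim : Tendsto u (cocompact E) (𝓝 0))
    (hΔu : ∀ᶠ x in cocompact E, -Δ u x ≤ lam * (V x * u x - f (u x))) :
    Integrable (fun x => u x ^ 2) μ := by
  have hlim0 : Tendsto u (cocompact E) (𝓝[≥] 0) := tendsto_nhdsWithin_iff.2 ⟨hlim, .of_forall hu0⟩
  refine integrable_sq_of_mul_sq_le_laplacian_add (c := lam * c) (K := lam * A) hu hu0 hlim
    (mul_pos hlam hc) (mul_nonneg hlam.le hA) hα ?_
  filter_upwards [hV, hlim0.eventually hf, hΔu] with x hVx hfx hΔx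
  have hVu : lam * (V x * u x) ≤ lam * (A * ‖x‖ ^ (-2 - α) * u x) :=
    mul_le_mul_of_nonneg_left (mul_le_mul_of_nonneg_right hVx (hu0 x)) hlam.le
  linarith [mul_le_mul_of_nonneg_left hfx hlam.le]

end Integrability

section LogisticEquation

open Laplacian

lemma exists_eventually_mul_sq_le_of_liminf_deriv_div_pos {f : ℝ → ℝ}
    (hf : ContinuousWithinAt f (Ici 0) 0) (hf0 : f 0 = 0)
    (h : 0 < liminf (fun t => ((deriv f t / t : ℝ) : EReal)) (𝓝[>] 0)) :
    ∃ c > 0, ∀ᶠ t in 𝓝[≥] 0, c * t ^ 2 ≤ f t := by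
  obtain ⟨c, hc0, hc⟩ := EReal.lt_iff_exists_real_btwn.1 h
  rw [EReal.coe_pos] at hc0
  obtain ⟨δ, hδ0, hδ⟩ := mem_nhdsGT_iff_exists_Ioc_subset.1 (eventually_lt_of_lt_liminf hc)
  rw [mem_Ioi] at hδ0
  have hderiv {t : ℝ} (ht : t ∈ Ioc 0 δ) : c * t < deriv f t :=
    (lt_div_iff₀ ht.1).1 (EReal.coe_lt_coe_iff.1 (hδ ht))
  have hdiff {t : ℝ} (ht : t ∈ Ioc 0 δ) : DifferentiableAt ℝ f t :=
    differentiableAt_of_deriv_ne_zero ((mul_pos hc0 ht.1).trans (hderiv ht)).ne'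
  have hquad (t : ℝ) : HasDerivAt (fun t => c / 2 * t ^ 2) (c * t) t :=
    ((hasDerivAt_pow 2 t).const_mul (c / 2)).congr_deriv (by push_cast; ring)
  have hmono : MonotoneOn (fun t => f t - c / 2 * t ^ 2) (Icc 0 δ) := by
    refine monotoneOn_of_deriv_nonneg (convex_Icc 0 δ) (fun t ht => ?_) (fun t ht => ?_)
      (fun t ht => ?_)
    · have hft : ContinuousWithinAt f (Icc 0 δ) t := by
        rcases ht.1.eq_or_lt with rfl | ht0
        exacts [hf.mono Icc_subset_Ici_self, (hdiff ⟨ht0, ht.2⟩).continuousAt.continuousWithinAt]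
      exact hft.sub (hquad t).continuousAt.continuousWithinAt
    · rw [interior_Icc] at ht
      exact ((hdiff (Ioo_subset_Ioc_self ht)).sub
        (hquad t).differentiableAt).differentiableWithinAt
    · rw [interior_Icc] at ht
      have ht' := Ioo_subset_Ioc_self ht
      rw [((hdiff ht').hasDerivAt.fun_sub (hquad t)).deriv]
      exact sub_nonneg.2 (hderiv ht').le
  refine ⟨c / 2, half_pos hc0, ?_⟩
  filter_upwards [Icc_mem_nhdsGE hδ0] with t ht
  simpa [hf0] using hmono (left_mem_Icc.2 hδ0.le) ht ht.1

variable {N : ℕ} {V u : Euc N → ℝ} {f : ℝ → ℝ} {lam : ℝ}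

lemma CondVDecay.exists_eventually_le (hV : CondVDecay N V) :
    ∃ A α : ℝ, 0 ≤ A ∧ 0 < α ∧ ∀ᶠ x in cocompact (Euc N), V x ≤ A * ‖x‖ ^ (-2 - α) := by
  obtain ⟨A, α, hA, hα, hVA⟩ := hV
  refine ⟨A, α, hA.le, hα, ?_⟩
  filter_upwards [tendsto_norm_cocompact_atTop.eventually_gt_atTop 0] with x hx
  exact (le_max_left _ _).trans (hVA x (norm_pos_iff.1 hx))

lemma CondF.exists_eventually_mul_sq_le (hf : CondF N V f) :
    ∃ c > 0, ∀ᶠ t in 𝓝[≥] 0, c * t ^ 2 ≤ f t :=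
  have ⟨hfC1, _, hf0, _, hliminf, _⟩ := hf
  exists_eventually_mul_sq_le_of_liminf_deriv_div_pos hfC1.continuous.continuousWithinAt hf0
    hliminf

lemma IsSolution.neg_laplacian_eq (hu : IsSolution N V f lam u) (x : Euc N) :
    -Δ u x = lam * (V x * u x - f (u x)) := by
  rw [← lap_eq_laplacian hu.smooth.contDiffAt, hu.eqn x]

end LogisticEquation

/-- any solution `u` of `(P_λ)` is square-integrable. -/
theorem stmt10 (N : ℕ) (hN : 3 ≤ N) (V V₁ V₂ : Euc N → ℝ)
    (hV : CondV N V V₁ V₂) (hdec : CondVDecay N V)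
    (f : ℝ → ℝ) (hf : CondF N V f)
    (lam : ℝ) (hlam : 0 < lam)
    (u : Euc N → ℝ) (hu : IsSolution N V f lam u) :
    Integrable (fun x : Euc N => u x ^ 2) := by
  obtain ⟨A, α, hA, hα, hVA⟩ := hdec.exists_eventually_le
  obtain ⟨c, hc, hfc⟩ := hf.exists_eventually_mul_sq_le
  exact stmt10_general hlam hA hα hVA hc hfc hu.smooth (fun x => (hu.pos x).le) hu.decay
    (.of_forall fun x => (hu.neg_laplacian_eq x).le)

end
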